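/- Let P be a finite pure weighted graded poset of rank d ≥ 2 with a standard weight scheme, in which every element of positive rank covers at least two elements and, for every x ∈ P(0) and u ∈ P(2) with x < u and every z with x ⋖ z ⋖ u, there exists w ≠ z with x ⋖ w ⋖ u. (1) If P satisfies equations TL.1 and TL.2 with constants c^=_1 and c^≠_1, then c^=_1 + c^≠_1 = 1. (2) If P satisfies equations TL.3 and TL.4 with constants c^=_2 and c^≠_2, then c^=_2 + c^≠_2 = 1. -/

import Mathlib

open Finset

attribute [local instance] Classical.propDecidable

noncomputable section

/-- A finite pure weighted graded poset of rank `d`, presented as a rank function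
and a weight scheme on a finite partial order `P`. -/
structure WGP (P : Type) [Fintype P] [PartialOrder P] where
  /-- the rank of the poset -/
  d : ℤ
  /-- the rank function -/
  rk : P → ℤ
  rk_mono : Monotone rk
  rk_lb : ∀ x, -1 ≤ rk x
  rk_ub : ∀ x, rk x ≤ d
  rk_covBy : ∀ a b : P, a ⋖ b → rk b = rk a + 1
  bot_unique : ∃! x : P, rk x = -1
  isPure : ∀ x : P, ∃ y : P, rk y = d ∧ x ≤ y
  /-- the weight function -/
  m : P → ℝ
  m_pos : ∀ x, 0 < m x
  /-- the transition probabilities: `p y x` is `p_{y → x}` -/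
  p : P → P → ℝ
  p_nonneg : ∀ y x, 0 ≤ p y x
  p_pos_iff : ∀ y x, 0 < p y x ↔ x ⋖ y
  p_sum : ∀ y, 0 ≤ rk y → ∑ x ∈ univ.filter (fun x => x ⋖ y), p y x = 1
  m_eq : ∀ x, rk x < d → m x = ∑ y ∈ univ.filter (fun y => x ⋖ y), p y x * m y
  m_bot : ∀ x, rk x = -1 → m x = 1

/-- `T` has at most `n` eigenvalues greater than `c`, counted with
(geometric) multiplicity. -/
def eigMultAboveLe {V : Type*} [AddCommGroup V] [Module ℝ V]
    (T : Module.End ℝ V) (c : ℝ) (n : ℕ) : Prop :=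
  ∀ s : Finset ℝ, (∀ μ ∈ s, c < μ) →
    ∑ μ ∈ s, Module.finrank ℝ (T.eigenspace μ) ≤ n

/-- `μ` is the second largest eigenvalue of `T`, counted with multiplicity. -/
def IsSecondLargestEig {V : Type*} [AddCommGroup V] [Module ℝ V]
    (T : Module.End ℝ V) (μ : ℝ) : Prop :=
  T.HasEigenvalue μ ∧ eigMultAboveLe T μ 1 ∧
    ∃ s : Finset ℝ, (∀ ν ∈ s, μ ≤ ν) ∧
      2 ≤ ∑ ν ∈ s, Module.finrank ℝ (T.eigenspace ν)

/-- `ν` is the least eigenvalue of `T`. -/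
def IsLeastEig {V : Type*} [AddCommGroup V] [Module ℝ V]
    (T : Module.End ℝ V) (ν : ℝ) : Prop :=
  T.HasEigenvalue ν ∧ ∀ c : ℝ, T.HasEigenvalue c → ν ≤ c

/-- `λ(T) ≤ lam`, i.e. the second largest eigenvalue of `T` (with multiplicity)
is at most `lam` and the least eigenvalue is at least `-lam`. -/
def lamBd {V : Type*} [AddCommGroup V] [Module ℝ V]
    (T : Module.End ℝ V) (lam : ℝ) : Prop :=
  eigMultAboveLe T lam 1 ∧ ∀ c : ℝ, T.HasEigenvalue c → -lam ≤ c

namespace WGP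

variable {P : Type} [Fintype P] [PartialOrder P] (W : WGP P)

/-- The level set `P(i)`. -/
def lvl (i : ℤ) : Finset P := univ.filter (fun x => W.rk x = i)

/-- The weighted inner product on `C^i`. -/
def innerAt (i : ℤ) (f g : P → ℝ) : ℝ := ∑ x ∈ W.lvl i, W.m x * f x * g x

/-- The squared norm on `C^i`. -/
def normSqAt (i : ℤ) (f : P → ℝ) : ℝ := W.innerAt i f f

/-- The norm on `C^i`. -/
def normAt (i : ℤ) (f : P → ℝ) : ℝ := Real.sqrt (W.normSqAt i f)

/-- The matrix of transition probabilities : entry `(y, x)` is `p_{y→x}`,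
which vanishes unless `x ⋖ y`.  This is also the matrix of the up operator. -/
def upMat : Matrix P P ℝ := Matrix.of fun y x => W.p y x

/-- The matrix of the down operator. -/
def downMat : Matrix P P ℝ := Matrix.of fun x y => W.p y x * W.m y / W.m x

/-- The up operator `U`. -/
def Up (f : P → ℝ) : P → ℝ := W.upMat.mulVec f

/-- The down operator `D`. -/
def Down (f : P → ℝ) : P → ℝ := W.downMat.mulVec f

/-- `chSum x y = Σ_{c ∈ Ch(y→x)} p(c)`, the total `p`-weight of maximal chains
from `x` up to `y` (the entry of the corresponding power of the transition
matrix). -/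
def chSum (x y : P) : ℝ := (W.upMat ^ (W.rk y - W.rk x).toNat) y x

/-- The induced weight function of the link `P_x`. -/
def mL (x y : P) : ℝ := W.m y / W.m x * W.chSum x y

/-- The induced transition probabilities of the link `P_x` :
`pL x z y = (p_x)_{z → y}`. -/
def pL (x z y : P) : ℝ := W.p z y * W.chSum x y / W.chSum x z

/-- The level set `P_x(j)` of the link of `x`. -/
def linkLvl (x : P) (j : ℤ) : Finset P :=
  univ.filter (fun y => x ≤ y ∧ W.rk y = W.rk x + 1 + j)

/-- The inner product of the link `P_x` at link-level `j`. -/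
def innerL (x : P) (j : ℤ) (f g : P → ℝ) : ℝ :=
  ∑ y ∈ W.linkLvl x j, W.mL x y * f y * g y

/-- The matrix of the up operator of the link `P_x`. -/
def upMatL (x : P) : Matrix P P ℝ :=
  Matrix.of fun z y => if y ⋖ z ∧ x ≤ y then W.pL x z y else 0

/-- The matrix of the down operator of the link `P_x`. -/
def downMatL (x : P) : Matrix P P ℝ :=
  Matrix.of fun y z => if y ⋖ z then W.pL x z y * W.mL x z / W.mL x y else 0

/-- The up operator of the link `P_x`. -/
def UpL (x : P) (f : P → ℝ) : P → ℝ := (W.upMatL x).mulVec f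

/-- The down operator of the link `P_x`. -/
def DownL (x : P) (f : P → ℝ) : P → ℝ := (W.downMatL x).mulVec f

/-- The up-down walk `M^+_{x,0}` of the link `P_x`. -/
def MplusL (x : P) (f : P → ℝ) : P → ℝ := W.DownL x (W.UpL x f)

/-- The down-up walk `M^-_{x,0}` of the link `P_x`. -/
def MminusL (x : P) (f : P → ℝ) : P → ℝ := W.UpL x (W.DownL x f)

/-- The adjacency matrix. -/
def adjMat : Matrix P P ℝ := Matrix.of fun y x =>
  if x = y then 0 else
    ∑ z ∈ univ.filter (fun z => x ⋖ z ∧ y ⋖ z),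
      W.m z * W.p z x * W.p z y / ((1 - W.p z y) * W.m y)

/-- The adjacency operator. -/
def Adj (f : P → ℝ) : P → ℝ := W.adjMat.mulVec f

/-- The adjacency matrix of the link `P_x`. -/
def adjMatL (x : P) : Matrix P P ℝ := Matrix.of fun y w =>
  if w = y then 0 else
    ∑ z ∈ univ.filter (fun z => w ⋖ z ∧ y ⋖ z),
      W.mL x z * W.pL x z w * W.pL x z y / ((1 - W.pL x z y) * W.mL x y)

/-- The adjacency operator of the link `P_x`. -/
def AdjL (x : P) (f : P → ℝ) : P → ℝ := (W.adjMatL x).mulVec f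

/-- The up-down walk `M^+_l` as an endomorphism of `C^l`. -/
def MplusEnd (l : ℤ) : Module.End ℝ ({x : P // W.rk x = l} → ℝ) :=
  ((W.downMat * W.upMat).submatrix Subtype.val Subtype.val).mulVecLin

/-- The up-down walk `M^+_{x,0}` as an endomorphism of `C^0(P_x)`. -/
def MplusEndL (x : P) : Module.End ℝ ({y : P // x ⋖ y} → ℝ) :=
  ((W.downMatL x * W.upMatL x).submatrix Subtype.val Subtype.val).mulVecLin

/-- The adjacency operator `A_x` of the link `P_x` as an endomorphism of
`C^0(P_x)`. -/
def AdjEndL (x : P) : Module.End ℝ ({y : P // x ⋖ y} → ℝ) :=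
  ((W.adjMatL x).submatrix Subtype.val Subtype.val).mulVecLin

/-- A standard weight scheme. -/
def Standard : Prop :=
  ∀ y x : P, x ⋖ y → W.p y x = 1 / ((univ.filter (fun z => z ⋖ y)).card : ℝ)

/-- `P` is lower regular at level `i` with constant `N`. -/
def LowerRegAt (i : ℤ) (N : ℕ) : Prop :=
  ∀ y : P, W.rk y = i → (univ.filter (fun z => z ⋖ y)).card = N

/-- `P` is middle regular at level `i` with constant `N`. -/
def MiddleRegAt (i : ℤ) (N : ℕ) : Prop :=
  ∀ x z : P, W.rk x = i + 1 → W.rk z = i - 1 → z < x →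
    (univ.filter (fun y => z ⋖ y ∧ y ⋖ x)).card = N

/-- `P` is `∨∧`-regular at level `i` with constant `N`. -/
def WedgeRegAt (i : ℤ) (N : ℕ) : Prop :=
  ∀ y₁ y₂ : P, W.rk y₁ = i → W.rk y₂ = i → y₁ ≠ y₂ → (∃ z, y₁ ⋖ z ∧ y₂ ⋖ z) →
    (univ.filter (fun s => s ⋖ y₁ ∧ s ⋖ y₂)).card = N

/-- `P` is `⅄`-regular with constant `R`. -/
def WyeReg (R : ℕ) : Prop :=
  ∀ u y₁ y₂ : P, W.rk u = 2 → W.rk y₁ = 0 → W.rk y₂ = 0 → y₁ ≠ y₂ →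
    y₁ < u → y₂ < u →
    (univ.filter (fun z => y₁ ⋖ z ∧ y₂ ⋖ z ∧ z ⋖ u)).card = R

/-- Property UL.1 with constants `c`. -/
def UL1 (c : ℤ → ℝ) : Prop :=
  ∀ l : ℤ, 0 ≤ l → l < W.d → ∀ y : P, W.rk y = l → ∀ x : P, y ⋖ x →
    ∑ z ∈ univ.filter (fun z => z ⋖ y), W.p y z ^ 2 / W.chSum z x = c l

/-- Property UL.2 with constants `c`. -/
def UL2 (c : ℤ → ℝ) : Prop :=
  ∀ l : ℤ, 0 ≤ l → l < W.d → ∀ y₁ y₂ : P, W.rk y₁ = l → W.rk y₂ = l → y₁ ≠ y₂ →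
    ∀ x : P, y₁ ⋖ x → y₂ ⋖ x →
    ∑ z ∈ univ.filter (fun z => z ⋖ y₁ ∧ z ⋖ y₂),
      W.p y₁ z * W.p y₂ z / W.chSum z x = c l

/-- Property UL.3 with constants `c`. -/
def UL3 (c : ℤ → ℝ) : Prop :=
  ∀ l : ℤ, 0 ≤ l → l < W.d → ∀ y : P, W.rk y = l →
    ∑ x ∈ univ.filter (fun x => y ⋖ x), W.m x * W.p x y ^ 2 = c l * W.m y

/-- Property AL. -/
def AL : Prop :=
  ∀ l : ℤ, 0 ≤ l → l ≤ W.d - 1 → ∀ x y : P, W.rk x = l → W.rk y = l → x ≠ y →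
    ∑ z ∈ univ.filter (fun z => x ⋖ z ∧ y ⋖ z),
        W.m z * W.p z x * W.p z y / (1 - W.p z x)
    = ∑ z ∈ univ.filter (fun z => x ⋖ z ∧ y ⋖ z),
        W.m z * W.p z x * W.p z y *
          ∑ s ∈ univ.filter (fun s => s ⋖ x ∧ s ⋖ y),
            W.p x s * W.p y s / (W.chSum s z - W.p z x * W.p x s)

/-- Equation TL.1 with constant `c`. -/
def TL1 (c : ℝ) : Prop :=
  ∀ y : P, W.rk y = 0 →
    c * W.m y = ∑ z ∈ univ.filter (fun z => y ⋖ z), W.m z * W.p z y ^ 2 *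
      ∑ x ∈ univ.filter (fun x => x ⋖ z ∧ x ≠ y), W.p z x / (1 - W.p z x) ^ 2

/-- Equation TL.2 with constant `c`. -/
def TL2 (c : ℝ) : Prop :=
  ∀ y₁ y₂ : P, W.rk y₁ = 0 → W.rk y₂ = 0 → y₁ ≠ y₂ →
    c * ∑ z ∈ univ.filter (fun z => y₁ ⋖ z ∧ y₂ ⋖ z),
          W.m z * W.p z y₁ * W.p z y₂ / (1 - W.p z y₁)
    = ∑ z ∈ univ.filter (fun z => y₁ ⋖ z ∧ y₂ ⋖ z),
        W.m z * W.p z y₁ * W.p z y₂ *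
          ∑ x ∈ univ.filter (fun x => x ⋖ z ∧ x ≠ y₁ ∧ x ≠ y₂),
            W.p z x / (1 - W.p z x) ^ 2

/-- Equation TL.3 with constant `c`. -/
def TL3 (c : ℝ) : Prop :=
  ∀ y : P, W.rk y = 0 →
    c * W.m y =
      ∑ x ∈ univ.filter (fun x => W.rk x = 0 ∧ x ≠ y),
        ∑ z ∈ univ.filter (fun z => x ⋖ z ∧ y ⋖ z),
          ∑ w ∈ univ.filter (fun w => w ≠ z ∧ x ⋖ w ∧ y ⋖ w),
            ∑ u ∈ univ.filter (fun u => z ⋖ u ∧ w ⋖ u),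
              W.m u * W.p u z * W.p u w * W.p w y * W.p z y * W.p w x * W.p z x /
                (W.chSum x u * (1 - W.p u z * W.p z x / W.chSum x u) *
                  (1 - W.p w x) * (1 - W.p z x))

/-- Equation TL.4 with constant `c`. -/
def TL4 (c : ℝ) : Prop :=
  ∀ y₁ y₂ : P, W.rk y₁ = 0 → W.rk y₂ = 0 → y₁ ≠ y₂ →
    c * ∑ z ∈ univ.filter (fun z => y₁ ⋖ z ∧ y₂ ⋖ z),
          W.m z * W.p z y₁ * W.p z y₂ / (1 - W.p z y₁)
    = ∑ x ∈ univ.filter (fun x => W.rk x = 0 ∧ x ≠ y₁ ∧ x ≠ y₂),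
        ∑ z ∈ univ.filter (fun z => x ⋖ z ∧ y₂ ⋖ z),
          ∑ w ∈ univ.filter (fun w => w ≠ z ∧ x ⋖ w ∧ y₁ ⋖ w),
            ∑ u ∈ univ.filter (fun u => z ⋖ u ∧ w ⋖ u),
              W.m u * W.p u z * W.p u w * W.p w y₁ * W.p z y₂ * W.p w x * W.p z x /
                (W.chSum x u * (1 - W.p u z * W.p z x / W.chSum x u) *
                  (1 - W.p w x) * (1 - W.p z x))

/-- The induced function `f̂_x ∈ C^0(P_x)` of `f ∈ C^0`. -/
def hatF (x : P) (f : P → ℝ) : P → ℝ := fun z =>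
  (1 / (1 - W.p z x)) * ∑ y ∈ univ.filter (fun y => y ≠ x ∧ y ⋖ z), W.p z y * f y

/-- `P` is connected: the Markov chain `M^+_0` on `P(0)` is irreducible. -/
def Connected : Prop :=
  ∀ y z : P, W.rk y = 0 → W.rk z = 0 →
    ∃ j : ℕ, 0 < j ∧ ((W.downMat * W.upMat) ^ j) z y ≠ 0

/-- The link `P_x` is connected: the Markov chain `M^+_{x,0}` on `P_x(0)` is
irreducible. -/
def LinkConnected (x : P) : Prop :=
  ∀ y z : P, x ⋖ y → x ⋖ z →
    ∃ j : ℕ, 0 < j ∧ ((W.downMatL x * W.upMatL x) ^ j) z y ≠ 0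

/-- `c` is a nontrivial eigenvalue of the adjacency operator `A` of `P`,
i.e. one with an eigenvector orthogonal to the constants. -/
def IsNontrivEigAdj (c : ℝ) : Prop :=
  ∃ f : P → ℝ, (∃ y, W.rk y = 0 ∧ f y ≠ 0) ∧
    (∀ y, W.rk y = 0 → W.Adj f y = c * f y) ∧
    W.innerAt 0 f (fun _ => 1) = 0

/-- `c` is a nontrivial eigenvalue of the adjacency operator `A_x` of the
link `P_x`. -/
def IsNontrivEigAdjL (x : P) (c : ℝ) : Prop :=
  ∃ f : P → ℝ, (∃ y, x ⋖ y ∧ f y ≠ 0) ∧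
    (∀ y, x ⋖ y → W.AdjL x f y = c * f y) ∧
    W.innerL x 0 f (fun _ => 1) = 0

end WGP

/-!
The weights `m` restrict to a probability measure on every level, so summing either pair of
equations over all `y₁, y₂` of rank `0` turns the left-hand sides into `c^= + c^≠`: the diagonal
contributes `c^=`, and the off-diagonal terms contribute `c^≠` because the adjacency matrix is
stochastic. The right-hand sides are the joint law of two random elements. Run the chain down to an
edge `z` and a vertex `x` of it; for TL.1 and TL.2 let `w = z`, for TL.3 and TL.4 let `w ≠ z` be
another edge at `x` inside the face through which the chain came; then move from `w` to `y₁` and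
from `z` to `y₂`, avoiding `x`. Their sum is the total mass `1`.
-/

/-- The probability vector `f` conditioned on avoiding the outcome `x`. It takes the junk value
`0` when `f x = 1`. -/
def condNe {α : Type*} (f : α → ℝ) (x y : α) : ℝ := if y = x then 0 else f y / (1 - f x)

section condNe

variable {α : Type*} {f : α → ℝ} {x y : α}

@[simp]
theorem condNe_self : condNe f x x = 0 := if_pos rfl

theorem condNe_of_ne (h : y ≠ x) : condNe f x y = f y / (1 - f x) := if_neg h

theorem condNe_eq_zero (h : f y = 0) : condNe f x y = 0 := by simp [condNe, h]

theorem sum_condNe {s : Finset α} (hs : ∑ y ∈ s, f y = 1) (hx : x ∈ s) (hfx : f x ≠ 1) :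
    ∑ y ∈ s, condNe f x y = 1 := by
  have h_erase : ∑ y ∈ s.erase x, f y = 1 - f x := by
    rw [← hs, ← add_sum_erase _ _ hx, add_sub_cancel_left]
  calc ∑ y ∈ s, condNe f x y = ∑ y ∈ s.erase x, condNe f x y := (sum_erase _ condNe_self).symm
    _ = ∑ y ∈ s.erase x, f y / (1 - f x) :=
      sum_congr rfl fun y hy => condNe_of_ne (ne_of_mem_erase hy)
    _ = 1 := by rw [← sum_div, h_erase, div_self (sub_ne_zero.2 hfx.symm)]

end condNe

namespace WGP

variable {P : Type} [Fintype P] [PartialOrder P] (W : WGP P)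

@[simp]
theorem mem_lvl {i : ℤ} {x : P} : x ∈ W.lvl i ↔ W.rk x = i := by simp [lvl]

theorem p_eq_zero {x y : P} (h : ¬x ⋖ y) : W.p y x = 0 :=
  le_antisymm (not_lt.1 (mt (W.p_pos_iff y x).1 h)) (W.p_nonneg y x)

theorem covBy_of_p_ne_zero {x y : P} (h : W.p y x ≠ 0) : x ⋖ y :=
  not_not.1 (mt W.p_eq_zero h)

theorem sum_lvl_p {i : ℤ} {y : P} (hi : -1 ≤ i) (hy : W.rk y = i + 1) :
    ∑ x ∈ W.lvl i, W.p y x = 1 := by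
  rw [← W.p_sum y (by omega)]
  refine (sum_subset (fun x hx => ?_) fun x _ hx => W.p_eq_zero (by simpa using hx)).symm
  have := W.rk_covBy x y (by simpa using hx)
  exact W.mem_lvl.2 (by omega)

theorem m_eq_sum_lvl {i : ℤ} {x : P} (hi : i < W.d) (hx : W.rk x = i) :
    W.m x = ∑ y ∈ W.lvl (i + 1), W.p y x * W.m y := by
  rw [W.m_eq x (by omega)]
  refine sum_subset (fun y hy => ?_) fun y _ hy => ?_
  · have := W.rk_covBy x y (by simpa using hy)
    exact W.mem_lvl.2 (by omega)
  · rw [W.p_eq_zero (by simpa using hy), zero_mul]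

theorem sum_lvl_m {i : ℤ} (hi : -1 ≤ i) (hid : i ≤ W.d) : ∑ x ∈ W.lvl i, W.m x = 1 := by
  induction i, hi using Int.leInduction with
  | base =>
    obtain ⟨b, hb, hb_unique⟩ := W.bot_unique
    have h_lvl : W.lvl (-1) = {b} := by
      ext x
      exact W.mem_lvl.trans ⟨fun hx => mem_singleton.2 (hb_unique x hx),
        fun hx => mem_singleton.1 hx ▸ hb⟩
    rw [h_lvl, sum_singleton, W.m_bot b hb]
  | succ i hi ih =>
    calc ∑ y ∈ W.lvl (i + 1), W.m y
        = ∑ y ∈ W.lvl (i + 1), ∑ x ∈ W.lvl i, W.p y x * W.m y :=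
          sum_congr rfl fun y hy => by
            rw [← sum_mul, W.sum_lvl_p hi (W.mem_lvl.1 hy), one_mul]
      _ = ∑ x ∈ W.lvl i, W.m x := by
          rw [sum_comm]
          exact sum_congr rfl fun x hx => (W.m_eq_sum_lvl (by omega) (W.mem_lvl.1 hx)).symm
      _ = 1 := ih (by omega)

theorem p_lt_one {z : P} (hcard : 2 ≤ #{y | y ⋖ z}) (x : P) : W.p z x < 1 := by
  obtain ⟨a, ha, hax⟩ := exists_mem_ne (Nat.lt_of_succ_le hcard) x
  have ha : a ⋖ z := by simpa using ha
  by_cases hx : x ⋖ z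
  · have h_rk := W.rk_covBy a z ha
    have h_lb := W.rk_lb a
    rw [← W.p_sum z (by omega)]
    exact single_lt_sum hax (by simpa using hx) (by simpa using ha) ((W.p_pos_iff z a).2 ha)
      fun y _ _ => W.p_nonneg z y
  · exact (W.p_eq_zero hx).trans_lt one_pos

theorem chSum_nonneg (x u : P) : 0 ≤ W.chSum x u :=
  Matrix.pow_apply_nonneg (A := W.upMat) (fun y z => W.p_nonneg y z) _ u x

theorem chSum_of_rk_eq_add_one {x z : P} (h : W.rk z = W.rk x + 1) : W.chSum x z = W.p z x := by
  rw [chSum, h, add_sub_cancel_left, Int.toNat_one, pow_one, upMat, Matrix.of_apply]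

theorem chSum_eq_sum_lvl {i : ℤ} {x u : P} (hx : W.rk x ≤ i) (hu : W.rk u = i + 1) :
    W.chSum x u = ∑ z ∈ W.lvl i, W.p u z * W.chSum x z := by
  have h_exp : (W.rk u - W.rk x).toNat = (i - W.rk x).toNat + 1 := by omega
  rw [chSum, h_exp, pow_succ', Matrix.mul_apply]
  symm
  refine sum_subset_zero_on_sdiff (subset_univ _) (fun z hz => ?_) fun z hz => ?_
  · refine mul_eq_zero_of_left (W.p_eq_zero fun h => ?_) _
    have := W.rk_covBy z u h
    simp only [mem_sdiff, mem_univ, true_and, mem_lvl] at hz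
    omega
  · rw [chSum, W.mem_lvl.1 hz, upMat, Matrix.of_apply]

theorem sum_lvl_pL {i : ℤ} {x u : P} (hx : W.rk x ≤ i) (hu : W.rk u = i + 1)
    (h : W.chSum x u ≠ 0) : ∑ z ∈ W.lvl i, W.pL x u z = 1 := by
  simp only [pL]
  rw [← sum_div, ← W.chSum_eq_sum_lvl hx hu, div_self h]

theorem chSum_pos_of_covBy {x z u : P} (hxz : x ⋖ z) (hzu : z ⋖ u) : 0 < W.chSum x u := by
  have hz := W.rk_covBy x z hxz
  rw [W.chSum_eq_sum_lvl (i := W.rk z) (by omega) (W.rk_covBy z u hzu)]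
  refine sum_pos' (fun w _ => mul_nonneg (W.p_nonneg u w) (W.chSum_nonneg x w))
    ⟨z, W.mem_lvl.2 rfl, mul_pos ((W.p_pos_iff u z).2 hzu) ?_⟩
  rw [W.chSum_of_rk_eq_add_one hz]
  exact (W.p_pos_iff z x).2 hxz

theorem pL_lt_one {x z w u : P} (hxz : x ⋖ z) (hzu : z ⋖ u) (hxw : x ⋖ w) (hwu : w ⋖ u)
    (hwz : w ≠ z) : W.pL x u z < 1 := by
  have hz := W.rk_covBy x z hxz
  have hw := W.rk_covBy x w hxw
  have h_chSum := W.chSum_pos_of_covBy hxz hzu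
  have h_pos : 0 < W.pL x u w := by
    rw [pL, W.chSum_of_rk_eq_add_one hw]
    exact div_pos (mul_pos ((W.p_pos_iff u w).2 hwu) ((W.p_pos_iff w x).2 hxw)) h_chSum
  rw [← W.sum_lvl_pL (i := W.rk z) (by omega) (W.rk_covBy z u hzu) h_chSum.ne']
  exact single_lt_sum hwz (W.mem_lvl.2 rfl) (W.mem_lvl.2 (hw.trans hz.symm)) h_pos fun v _ _ =>
    div_nonneg (mul_nonneg (W.p_nonneg u v) (W.chSum_nonneg x v)) h_chSum.le

theorem m_mul_adjMat_of_ne {x y : P} (h : x ≠ y) :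
    W.m y * W.adjMat y x =
      ∑ z with y ⋖ z ∧ x ⋖ z, W.m z * W.p z y * W.p z x / (1 - W.p z y) := by
  have hm := (W.m_pos y).ne'
  rw [adjMat, Matrix.of_apply, if_neg h, mul_sum]
  simp only [and_comm]
  refine sum_congr rfl fun z _ => ?_
  field_simp

theorem m_mul_adjMat {i : ℤ} {y : P} (hy : W.rk y = i) (x : P) :
    W.m y * W.adjMat y x = ∑ z ∈ W.lvl (i + 1), W.p z y * W.m z * condNe (W.p z) y x := by
  obtain rfl | h := eq_or_ne x y
  · simp [adjMat]
  rw [W.m_mul_adjMat_of_ne h]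
  refine sum_subset_zero_on_sdiff (fun z hz => ?_) (fun z hz => ?_) fun z _ => ?_
  · have := W.rk_covBy y z (mem_filter.1 hz).2.1
    exact W.mem_lvl.2 (by omega)
  · by_contra h_ne
    have hyz := W.covBy_of_p_ne_zero (left_ne_zero_of_mul (left_ne_zero_of_mul h_ne))
    have hxz := W.covBy_of_p_ne_zero (mt condNe_eq_zero (right_ne_zero_of_mul h_ne))
    exact (mem_sdiff.1 hz).2 (by simp [hyz, hxz])
  · rw [condNe_of_ne h]
    ring

theorem sum_lvl_adjMat {i : ℤ} {y : P} (hi : i < W.d) (hy : W.rk y = i)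
    (hp : ∀ z, W.rk z = i + 1 → W.p z y ≠ 1) : ∑ x ∈ W.lvl i, W.adjMat y x = 1 := by
  have h_lb := W.rk_lb y
  refine mul_left_cancel₀ (W.m_pos y).ne' ?_
  simp only [mul_sum, W.m_mul_adjMat hy]
  rw [sum_comm, mul_one, W.m_eq_sum_lvl hi hy]
  refine sum_congr rfl fun z hz => ?_
  have hz := W.mem_lvl.1 hz
  rw [← mul_sum, sum_condNe (W.sum_lvl_p (by omega) hz) (W.mem_lvl.2 hy) (hp z hz), mul_one]

/-- The joint law of two rank-`0` elements `y₁, y₂` obtained by sampling `(x, z, w)` with law `κ`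
and then, independently, `y₁` below `w` and `y₂` below `z`, both conditioned on avoiding `x`.
The right-hand sides of the equations of Property TL are of this form. -/
def jointLaw (κ : P → P → P → ℝ) (y₁ y₂ : P) : ℝ :=
  ∑ x ∈ W.lvl 0, ∑ z ∈ W.lvl 1, ∑ w ∈ W.lvl 1,
    κ x z w * (condNe (W.p w) x y₁ * condNe (W.p z) x y₂)

/-- `κ` is a law of triples `(x, z, w)` whose marginal on the pairs `(x, z)` is that of a random
maximal chain of the poset. -/
def HasChainMarginal (κ : P → P → P → ℝ) : Prop :=
  ∀ x z, W.rk x = 0 → W.rk z = 1 → ∑ w ∈ W.lvl 1, κ x z w = W.m z * W.p z x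

section jointLaw

variable {W} {κ : P → P → P → ℝ}

theorem sum_jointLaw (hd : 1 ≤ W.d) (hp : ∀ x z, W.rk z = 1 → W.p z x < 1)
    (hκ : W.HasChainMarginal κ) :
    ∑ y₁ ∈ W.lvl 0, ∑ y₂ ∈ W.lvl 0, W.jointLaw κ y₁ y₂ = 1 := by
  have h_condNe {x z : P} (hx : x ∈ W.lvl 0) (hz : z ∈ W.lvl 1) :
      ∑ y ∈ W.lvl 0, condNe (W.p z) x y = 1 :=
    sum_condNe (W.sum_lvl_p (by norm_num) (W.mem_lvl.1 hz)) hx (hp x z (W.mem_lvl.1 hz)).ne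
  calc ∑ y₁ ∈ W.lvl 0, ∑ y₂ ∈ W.lvl 0, W.jointLaw κ y₁ y₂
      = ∑ x ∈ W.lvl 0, ∑ z ∈ W.lvl 1, ∑ w ∈ W.lvl 1, ∑ y₁ ∈ W.lvl 0, ∑ y₂ ∈ W.lvl 0,
          κ x z w * (condNe (W.p w) x y₁ * condNe (W.p z) x y₂) := by
        simp only [jointLaw]
        rw [sum_comm_cycle]
        refine sum_congr rfl fun x _ => ?_
        rw [sum_comm_cycle]
        exact sum_congr rfl fun z _ => sum_comm_cycle
    _ = ∑ x ∈ W.lvl 0, ∑ z ∈ W.lvl 1, ∑ w ∈ W.lvl 1, κ x z w :=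
        sum_congr rfl fun x hx => sum_congr rfl fun z hz => sum_congr rfl fun w hw => by
          simp only [← mul_sum]
          rw [← sum_mul, h_condNe hx hz, h_condNe hx hw, mul_one, mul_one]
    _ = ∑ z ∈ W.lvl 1, ∑ x ∈ W.lvl 0, W.m z * W.p z x := by
        rw [sum_comm]
        exact sum_congr rfl fun z hz => sum_congr rfl fun x hx =>
          hκ x z (W.mem_lvl.1 hx) (W.mem_lvl.1 hz)
    _ = ∑ z ∈ W.lvl 1, W.m z := sum_congr rfl fun z hz => by
        rw [← mul_sum, W.sum_lvl_p (by norm_num) (W.mem_lvl.1 hz), mul_one]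
    _ = 1 := W.sum_lvl_m (by norm_num) hd

theorem add_eq_one_of_jointLaw (hd : 1 ≤ W.d) (hp : ∀ x z, W.rk z = 1 → W.p z x < 1)
    (hκ : W.HasChainMarginal κ) {c c' : ℝ}
    (h_diag : ∀ y, W.rk y = 0 → c * W.m y = W.jointLaw κ y y)
    (h_offDiag : ∀ y₁ y₂, W.rk y₁ = 0 → W.rk y₂ = 0 → y₁ ≠ y₂ →
      c' * ∑ z with y₁ ⋖ z ∧ y₂ ⋖ z, W.m z * W.p z y₁ * W.p z y₂ / (1 - W.p z y₁) =
        W.jointLaw κ y₁ y₂) :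
    c + c' = 1 := by
  have h_row (y : P) (hy : y ∈ W.lvl 0) :
      ∑ y₂ ∈ W.lvl 0, W.jointLaw κ y y₂ = (c + c') * W.m y := by
    have hy0 := W.mem_lvl.1 hy
    have h_adj : ∑ y₂ ∈ (W.lvl 0).erase y, W.adjMat y y₂ = 1 := by
      rw [sum_erase _ (by simp [adjMat]),
        W.sum_lvl_adjMat (by omega) hy0 fun z hz => (hp y z hz).ne]
    have h_erase : ∑ y₂ ∈ (W.lvl 0).erase y, W.jointLaw κ y y₂ =
        ∑ y₂ ∈ (W.lvl 0).erase y, c' * W.m y * W.adjMat y y₂ :=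
      sum_congr rfl fun y₂ hy₂ => by
        obtain ⟨h_ne, hy₂⟩ := mem_erase.1 hy₂
        rw [← h_offDiag y y₂ hy0 (W.mem_lvl.1 hy₂) h_ne.symm, mul_assoc,
          W.m_mul_adjMat_of_ne h_ne]
    rw [← add_sum_erase _ _ hy, ← h_diag y hy0, h_erase, ← mul_sum, h_adj]
    ring
  calc c + c' = ∑ y ∈ W.lvl 0, (c + c') * W.m y := by
        rw [← mul_sum, W.sum_lvl_m (by norm_num) (by omega), mul_one]
    _ = 1 := by rw [← sum_congr rfl h_row, sum_jointLaw hd hp hκ]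

theorem jointLaw_eq_sum_filter
    (hκ : ∀ x z w, W.rk x = 0 → W.rk w = 1 → κ x z w ≠ 0 → w ≠ z ∧ x ⋖ z ∧ x ⋖ w) (y₁ y₂ : P) :
    W.jointLaw κ y₁ y₂ =
      ∑ x with W.rk x = 0 ∧ x ≠ y₁ ∧ x ≠ y₂, ∑ z with x ⋖ z ∧ y₂ ⋖ z,
        ∑ w with w ≠ z ∧ x ⋖ w ∧ y₁ ⋖ w,
          κ x z w * (W.p w y₁ / (1 - W.p w x) * (W.p z y₂ / (1 - W.p z x))) := by
  symm
  refine sum_subset_zero_on_sdiff (fun x hx => ?_) (fun x hx => ?_) fun x hx => ?_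
  · exact W.mem_lvl.2 (mem_filter.1 hx).2.1
  · obtain ⟨hx, hx_not⟩ := mem_sdiff.1 hx
    have h_eq : y₁ = x ∨ y₂ = x := by
      by_contra! h
      exact hx_not (by simp [W.mem_lvl.1 hx, h.1.symm, h.2.symm])
    rcases h_eq with rfl | rfl <;> simp
  obtain ⟨-, hx, h1, h2⟩ := mem_filter.1 hx
  refine sum_subset_zero_on_sdiff (fun z hz => ?_) (fun z hz => ?_) fun z _ => ?_
  · have := W.rk_covBy x z (mem_filter.1 hz).2.1
    exact W.mem_lvl.2 (by omega)
  · refine sum_eq_zero fun w hw => ?_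
    by_contra h_ne
    obtain ⟨h_law, h_cond⟩ := mul_ne_zero_iff.1 h_ne
    have hyz := W.covBy_of_p_ne_zero (mt condNe_eq_zero (right_ne_zero_of_mul h_cond))
    have hxz := (hκ x z w hx (W.mem_lvl.1 hw) h_law).2.1
    exact (mem_sdiff.1 hz).2 (by simp [hxz, hyz])
  refine sum_subset_zero_on_sdiff (fun w hw => ?_) (fun w hw => ?_) fun w _ => ?_
  · have := W.rk_covBy x w (mem_filter.1 hw).2.2.1
    exact W.mem_lvl.2 (by omega)
  · by_contra h_ne
    obtain ⟨h_law, h_cond⟩ := mul_ne_zero_iff.1 h_ne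
    have hyw := W.covBy_of_p_ne_zero (mt condNe_eq_zero (left_ne_zero_of_mul h_cond))
    obtain ⟨hw, hw_not⟩ := mem_sdiff.1 hw
    obtain ⟨hwz, -, hxw⟩ := hκ x z w hx (W.mem_lvl.1 hw) h_law
    exact hw_not (by simp [hwz, hxw, hyw])
  rw [condNe_of_ne h1.symm, condNe_of_ne h2.symm]

end jointLaw

/-- The law of `(x, z, z)` for a random chain `x ⋖ z`; it produces equations TL.1 and TL.2. -/
def edgeLaw (x z w : P) : ℝ := if w = z then W.m z * W.p z x else 0

theorem hasChainMarginal_edgeLaw : W.HasChainMarginal W.edgeLaw := fun x z _ hz => by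
  simp [edgeLaw, hz]

theorem jointLaw_edgeLaw {y₁ : P} (hy₁ : W.rk y₁ = 0) (y₂ : P) :
    W.jointLaw W.edgeLaw y₁ y₂ =
      ∑ z with y₁ ⋖ z ∧ y₂ ⋖ z, W.m z * W.p z y₁ * W.p z y₂ *
        ∑ x with x ⋖ z ∧ x ≠ y₁ ∧ x ≠ y₂, W.p z x / (1 - W.p z x) ^ 2 := by
  have h_diag : W.jointLaw W.edgeLaw y₁ y₂ = ∑ z ∈ W.lvl 1, ∑ x ∈ W.lvl 0,
      W.m z * W.p z x * (condNe (W.p z) x y₁ * condNe (W.p z) x y₂) := by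
    rw [jointLaw, sum_comm]
    refine sum_congr rfl fun z hz => sum_congr rfl fun x _ => ?_
    simp only [edgeLaw, ite_mul, zero_mul, sum_ite_eq', if_pos hz]
  rw [h_diag]
  symm
  refine sum_subset_zero_on_sdiff (fun z hz => ?_) (fun z hz => ?_) fun z hz => ?_
  · have := W.rk_covBy y₁ z (mem_filter.1 hz).2.1
    exact W.mem_lvl.2 (by omega)
  · refine sum_eq_zero fun x _ => ?_
    have h_not : ¬y₁ ⋖ z ∨ ¬y₂ ⋖ z := by simpa [imp_iff_not_or] using (mem_sdiff.1 hz).2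
    rcases h_not with h | h <;> simp [condNe_eq_zero (W.p_eq_zero h)]
  · rw [mul_sum]
    refine sum_subset_zero_on_sdiff (fun x hx => ?_) (fun x hx => ?_) fun x hx => ?_
    · have hz := W.rk_covBy y₁ z (mem_filter.1 hz).2.1
      have := W.rk_covBy x z (mem_filter.1 hx).2.1
      exact W.mem_lvl.2 (by omega)
    · by_contra h_ne
      have hxz := W.covBy_of_p_ne_zero (right_ne_zero_of_mul (left_ne_zero_of_mul h_ne))
      have h1 : x ≠ y₁ := by rintro rfl; simp at h_ne
      have h2 : x ≠ y₂ := by rintro rfl; simp at h_ne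
      exact (mem_sdiff.1 hx).2 (by simp [hxz, h1, h2])
    · obtain ⟨-, -, h1, h2⟩ := mem_filter.1 hx
      rw [condNe_of_ne h1.symm, condNe_of_ne h2.symm]
      field_simp

theorem add_eq_one_of_TL1_of_TL2 (hd : 1 ≤ W.d) (hp : ∀ x z, W.rk z = 1 → W.p z x < 1)
    {c c' : ℝ} (h1 : W.TL1 c) (h2 : W.TL2 c') : c + c' = 1 := by
  refine add_eq_one_of_jointLaw hd hp W.hasChainMarginal_edgeLaw (fun y hy => ?_)
    fun y₁ y₂ hy₁ hy₂ h => ?_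
  · rw [h1 y hy, W.jointLaw_edgeLaw hy]
    simp only [and_self, sq, mul_assoc]
  · rw [h2 y₁ y₂ hy₁ hy₂ h, W.jointLaw_edgeLaw hy₁]

/-- The law of `(x, z, w)` for a random chain `x ⋖ z ⋖ u` with `u` of rank `2`, where `w` is the
middle of a second chain from `u` to `x`, conditioned on avoiding `z`; it produces equations TL.3
and TL.4. -/
def faceLaw (x z w : P) : ℝ :=
  ∑ u ∈ W.lvl 2, W.m u * W.p u z * W.p z x * condNe (W.pL x u) z w

theorem hasChainMarginal_faceLaw (hd : 2 ≤ W.d)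
    (hzw : ∀ x z u, W.rk x = 0 → x ⋖ z → z ⋖ u → ∃ w, w ≠ z ∧ x ⋖ w ∧ w ⋖ u) :
    W.HasChainMarginal W.faceLaw := fun x z hx hz => by
  simp only [faceLaw]
  rw [sum_comm, W.m_eq_sum_lvl (by omega) hz, sum_mul]
  refine sum_congr rfl fun u hu => ?_
  rw [← mul_sum, mul_comm (W.m u)]
  obtain h_zero | ⟨hzu, hxz⟩ : W.p u z * W.m u * W.p z x = 0 ∨ z ⋖ u ∧ x ⋖ z := by
    by_cases h : z ⋖ u ∧ x ⋖ z
    · exact .inr h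
    · rcases not_and_or.1 h with h | h <;> simp [W.p_eq_zero h]
  · rw [h_zero, zero_mul]
  · obtain ⟨w, hwz, hxw, hwu⟩ := hzw x z u hx hxz hzu
    rw [sum_condNe (W.sum_lvl_pL (by omega) (W.mem_lvl.1 hu) (W.chSum_pos_of_covBy hxz hzu).ne')
      (W.mem_lvl.2 hz) (W.pL_lt_one hxz hzu hxw hwu hwz).ne, mul_one]

theorem faceLaw_eq {x z w : P} (hx : W.rk x = 0) (hxz : x ⋖ z) (hxw : x ⋖ w) (hwz : w ≠ z) :
    W.faceLaw x z w = ∑ u with z ⋖ u ∧ w ⋖ u,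
      W.m u * W.p u z * W.p u w * W.p w x * W.p z x /
        (W.chSum x u * (1 - W.p u z * W.p z x / W.chSum x u)) := by
  have hz := W.rk_covBy x z hxz
  have hw := W.rk_covBy x w hxw
  symm
  refine sum_subset_zero_on_sdiff (fun u hu => ?_) (fun u hu => ?_) fun u _ => ?_
  · have := W.rk_covBy z u (mem_filter.1 hu).2.1
    exact W.mem_lvl.2 (by omega)
  · have h_not : ¬z ⋖ u ∨ ¬w ⋖ u := by simpa [imp_iff_not_or] using (mem_sdiff.1 hu).2
    rcases h_not with h | h
    · simp [W.p_eq_zero h]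
    · rw [condNe_eq_zero (by simp [pL, W.p_eq_zero h]), mul_zero]
  · rw [condNe_of_ne hwz, pL, pL, W.chSum_of_rk_eq_add_one hz, W.chSum_of_rk_eq_add_one hw]
    simp only [div_eq_mul_inv, mul_inv]
    ring

theorem covBy_of_faceLaw_ne_zero {x z w : P} (hw : W.rk w = W.rk x + 1)
    (h : W.faceLaw x z w ≠ 0) : w ≠ z ∧ x ⋖ z ∧ x ⋖ w := by
  obtain ⟨u, -, hu⟩ := exists_ne_zero_of_sum_ne_zero h
  obtain ⟨h_left, h_cond⟩ := mul_ne_zero_iff.1 hu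
  have h_num : W.p u w * W.chSum x w ≠ 0 := fun h0 =>
    h_cond (condNe_eq_zero (by rw [pL, h0, zero_div]))
  rw [W.chSum_of_rk_eq_add_one hw] at h_num
  refine ⟨?_, W.covBy_of_p_ne_zero (right_ne_zero_of_mul h_left),
    W.covBy_of_p_ne_zero (right_ne_zero_of_mul h_num)⟩
  rintro rfl
  exact h_cond condNe_self

theorem jointLaw_faceLaw (y₁ y₂ : P) :
    W.jointLaw W.faceLaw y₁ y₂ =
      ∑ x with W.rk x = 0 ∧ x ≠ y₁ ∧ x ≠ y₂, ∑ z with x ⋖ z ∧ y₂ ⋖ z,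
        ∑ w with w ≠ z ∧ x ⋖ w ∧ y₁ ⋖ w, ∑ u with z ⋖ u ∧ w ⋖ u,
          W.m u * W.p u z * W.p u w * W.p w y₁ * W.p z y₂ * W.p w x * W.p z x /
            (W.chSum x u * (1 - W.p u z * W.p z x / W.chSum x u) *
              (1 - W.p w x) * (1 - W.p z x)) := by
  rw [jointLaw_eq_sum_filter fun x z w hx hw => W.covBy_of_faceLaw_ne_zero (by omega)]
  refine sum_congr rfl fun x hx => sum_congr rfl fun z hz => sum_congr rfl fun w hw => ?_
  obtain ⟨-, hx, -⟩ := mem_filter.1 hx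
  obtain ⟨-, hxz, -⟩ := mem_filter.1 hz
  obtain ⟨-, hwz, hxw, -⟩ := mem_filter.1 hw
  rw [W.faceLaw_eq hx hxz hxw hwz, sum_mul]
  refine sum_congr rfl fun u _ => ?_
  simp only [div_eq_mul_inv, mul_inv]
  ring

theorem add_eq_one_of_TL3_of_TL4 (hd : 2 ≤ W.d) (hp : ∀ x z, W.rk z = 1 → W.p z x < 1)
    (hzw : ∀ x z u, W.rk x = 0 → x ⋖ z → z ⋖ u → ∃ w, w ≠ z ∧ x ⋖ w ∧ w ⋖ u)
    {c c' : ℝ} (h3 : W.TL3 c) (h4 : W.TL4 c') : c + c' = 1 := by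
  refine add_eq_one_of_jointLaw (by omega) hp (W.hasChainMarginal_faceLaw hd hzw)
    (fun y hy => ?_) fun y₁ y₂ hy₁ hy₂ h => ?_
  · rw [h3 y hy, W.jointLaw_faceLaw]
    simp only [and_self]
  · rw [h4 y₁ y₂ hy₁ hy₂ h, W.jointLaw_faceLaw]

end WGP

theorem stmt15_general {P : Type} [Fintype P] [PartialOrder P] (W : WGP P)
    (hcov : ∀ z : P, W.rk z = 1 → 2 ≤ #{y | y ⋖ z}) (c1e c1n c2e c2n : ℝ) :
    (1 ≤ W.d → W.TL1 c1e → W.TL2 c1n → c1e + c1n = 1) ∧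
    (2 ≤ W.d → (∀ x z u, W.rk x = 0 → x ⋖ z → z ⋖ u → ∃ w, w ≠ z ∧ x ⋖ w ∧ w ⋖ u) →
      W.TL3 c2e → W.TL4 c2n → c2e + c2n = 1) := by
  have hp (x z : P) (hz : W.rk z = 1) : W.p z x < 1 := W.p_lt_one (hcov z hz) x
  exact ⟨fun hd => W.add_eq_one_of_TL1_of_TL2 hd hp,
    fun hd hzw => W.add_eq_one_of_TL3_of_TL4 hd hp hzw⟩

/-- the constants of Property TL sum to one. -/
theorem stmt15 {P : Type} [Fintype P] [PartialOrder P] (W : WGP P)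
    (hd : 2 ≤ W.d) (hstd : W.Standard)
    (hcov : ∀ y : P, 1 ≤ W.rk y → 2 ≤ (Finset.univ.filter (fun z => z ⋖ y)).card)
    (hzw : ∀ x u z : P, W.rk x = 0 → W.rk u = 2 → x < u → x ⋖ z → z ⋖ u →
      ∃ w : P, w ≠ z ∧ x ⋖ w ∧ w ⋖ u)
    (c1e c1n c2e c2n : ℝ) :
    (W.TL1 c1e → W.TL2 c1n → c1e + c1n = 1) ∧
    (W.TL3 c2e → W.TL4 c2n → c2e + c2n = 1) := by
  obtain ⟨h12, h34⟩ := stmt15_general W (fun z hz => hcov z (by omega)) c1e c1n c2e c2n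
  exact ⟨h12 (by omega), h34 hd fun x z u hx hxz hzu =>
    hzw x u z hx (by rw [W.rk_covBy z u hzu, W.rk_covBy x z hxz]; omega)
      (hxz.lt.trans hzu.lt) hxz hzu⟩
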